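/- Let R be a commutative Noetherian ring and M a weakly Laskerian R-module. Then for each nonnegative integer k, M has a finitely generated submodule N_k such that Supp(M/N_k) ∩ A(R,k) is a finite set. -/

import Mathlib

/-!
Suppose `Supp (M / N) ∩ A(R, k)` is infinite for every finitely generated `N`. A submodule `L` of
`M` with `Ass (M / L)` infinite is built as the union of a chain of finitely generated submodules,
carrying along a growing finite set of pairs `(q, y)`, with `q ∈ A(R, k)`, such that the
annihilator of `y` modulo the current submodule is exactly `q`.

To extend `N` (`exists_extension`), pick a new prime `p ∈ Supp (M / N) ∩ A(R, k)` and `x ∈ M` whose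
annihilator modulo `N` lies in `p`. For any `s ∉ p`, the element `s x` has annihilator exactly `p`
modulo `N' = N + p s x`. The old pairs must survive in `M / N'`: since `t y ∉ N` for `t ∉ q`,
Krull's intersection theorem in `(M / N)_q` (`exists_pow_forall_smul_ne`) gives an `n` such that no
`t y` with `t ∉ q` lies in `N + q ^ n x`. Distinct primes in `A(R, k)` are incomparable
(`eq_of_le_of_mem_dimSet`), so `s` can be chosen in the product of these powers `q ^ n` and
outside `p`.
-/

/-- `A(R, k)` is the set of primes `p` of `R` with `dim (R / p) = k`. -/
def dimSet (R : Type*) [CommRing R] (k : ℕ) : Set (PrimeSpectrum R) :=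
  {p | ringKrullDim (R ⧸ p.asIdeal) = k}

/-- Distinct primes with the same finite coheight are incomparable. -/
lemma eq_of_le_of_mem_dimSet {R : Type*} [CommRing R] {k : ℕ} {p q : PrimeSpectrum R}
    (hp : p ∈ dimSet R k) (hq : q ∈ dimSet R k) (h : q.asIdeal ≤ p.asIdeal) : q = p := by
  by_contra hne
  obtain ⟨r, hrp, hrq⟩ : ∃ r ∈ p.asIdeal, r ∉ q.asIdeal := by
    by_contra! hcon
    exact hne (PrimeSpectrum.ext (le_antisymm h hcon))
  have hdim := ringKrullDim_succ_le_of_surjective (Ideal.Quotient.factor h)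
    (Ideal.Quotient.factor_surjective h) (r := Ideal.Quotient.mk q.asIdeal r)
    (mem_nonZeroDivisors_of_ne_zero (by rwa [Ne, Ideal.Quotient.eq_zero_iff_mem]))
    (by rw [Ideal.Quotient.factor_mk, Ideal.Quotient.eq_zero_iff_mem]; exact hrp)
  have hp' : ringKrullDim (R ⧸ p.asIdeal) = k := hp
  have hq' : ringKrullDim (R ⧸ q.asIdeal) = k := hq
  rw [hp', hq'] at hdim
  have hlt : k + 1 ≤ k := by exact_mod_cast hdim
  omega

/-- Krull's intersection theorem at a prime `p`: if `y` is nonzero in `Q_p`, then for some `n` the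
image of `y` does not lie in `p ^ n x` localized at `p`. -/
lemma exists_pow_forall_smul_ne {R : Type*} [CommRing R] [IsNoetherianRing R]
    {Q : Type*} [AddCommGroup Q] [Module R Q] (p : Ideal R) [p.IsPrime] (x y : Q)
    (hy : ∀ t ∉ p, t • y ≠ 0) :
    ∃ n : ℕ, ∀ c ∈ p ^ n, ∀ t ∉ p, t • y ≠ c • x := by
  by_contra! hcon
  let Rp := Localization.AtPrime p
  let x' : LocalizedModule p.primeCompl Q := LocalizedModule.mk x 1
  let y' : LocalizedModule p.primeCompl Q := LocalizedModule.mk y 1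
  let F : Submodule Rp (LocalizedModule p.primeCompl Q) := Submodule.span Rp {x'}
  have hx' : x' ∈ F := Submodule.mem_span_singleton_self x'
  have key : ∀ n : ℕ, ∃ a ∈ IsLocalRing.maximalIdeal Rp ^ n, y' = a • x' := by
    intro n
    obtain ⟨c, hc, t, ht, hty⟩ := hcon n
    refine ⟨Localization.mk c ⟨t, ht⟩, ?_, ?_⟩
    · rw [← Localization.AtPrime.map_eq_maximalIdeal, ← Ideal.map_pow, Localization.mk_eq_mk',
        IsLocalization.mk'_mem_iff]
      exact Ideal.mem_map_of_mem _ hc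
    · rw [LocalizedModule.mk_smul_mk, LocalizedModule.mk_eq]
      refine ⟨1, ?_⟩
      simp [Submonoid.smul_def, hty]
  have hy' : y' ∈ F := by
    obtain ⟨a, -, ha⟩ := key 0
    rw [ha]
    exact F.smul_mem a hx'
  have hmem : (⟨y', hy'⟩ : F) ∈
      (⨅ i : ℕ, IsLocalRing.maximalIdeal Rp ^ i • (⊤ : Submodule Rp F)) := by
    rw [Submodule.mem_iInf]
    intro i
    obtain ⟨a, ha, hay⟩ := key i
    have heq : (⟨y', hy'⟩ : F) = a • ⟨x', hx'⟩ := Subtype.ext hay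
    rw [heq]
    exact Submodule.smul_mem_smul ha trivial
  have : Module.Finite Rp F := Module.Finite.span_singleton Rp x'
  rw [Ideal.iInf_pow_smul_eq_bot_of_isLocalRing _ (Ideal.IsPrime.ne_top inferInstance),
    Submodule.mem_bot] at hmem
  have hzero : y' = 0 := congrArg Subtype.val hmem
  rw [← LocalizedModule.zero_mk (1 : p.primeCompl), LocalizedModule.mk_eq] at hzero
  obtain ⟨u, hu⟩ := hzero
  exact hy u.1 u.2 (by simpa [Submonoid.smul_def] using hu)

/-- A finitely generated submodule `N`, with finitely many pairs `(q, y)` such that `q ∈ A(R, k)`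
is the annihilator of `y` modulo `N`. -/
structure WitnessStage (R M : Type*) [CommRing R] [AddCommGroup M] [Module R M] (k : ℕ) where
  /-- The submodule `N`. -/
  N : Submodule R M
  /-- The pairs `(q, y)`. -/
  W : Finset (PrimeSpectrum R × M)
  fg : N.FG
  mem_dimSet : ∀ w ∈ W, w.1 ∈ dimSet R k
  smul_mem_iff : ∀ w ∈ W, ∀ a : R, a • w.2 ∈ N ↔ a ∈ w.1.asIdeal

open Classical in
/-- As long as `Supp (M / N) ∩ A(R, k)` is infinite, a stage extends to one with a new prime. -/
lemma exists_extension {R : Type*} [CommRing R] [IsNoetherianRing R]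
    {M : Type*} [AddCommGroup M] [Module R M] {k : ℕ} (S : WitnessStage R M k)
    (hinf : (Module.support R (M ⧸ S.N) ∩ dimSet R k).Infinite) :
    ∃ S' : WitnessStage R M k, S.N ≤ S'.N ∧ S.W ⊆ S'.W ∧
      (S.W.image Prod.fst).card < (S'.W.image Prod.fst).card := by
  obtain ⟨p, ⟨hpsupp, hpdim⟩, hpnew⟩ := hinf.exists_notMem_finset (S.W.image Prod.fst)
  obtain ⟨m, hm⟩ := Module.mem_support_iff'.mp hpsupp
  obtain ⟨x, rfl⟩ := S.N.mkQ_surjective m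
  have hx : ∀ r : R, r • x ∈ S.N → r ∈ p.asIdeal := by
    intro r hr
    by_contra hrp
    refine hm r hrp ?_
    rw [← map_smul]
    exact (Submodule.Quotient.mk_eq_zero S.N).mpr hr
  have hkrull : ∀ w : PrimeSpectrum R × M, ∃ n : ℕ, w ∈ S.W →
      ∀ c ∈ w.1.asIdeal ^ n, ∀ t ∉ w.1.asIdeal, t • w.2 - c • x ∉ S.N := by
    intro w
    by_cases hw : w ∈ S.W
    · obtain ⟨n, hn⟩ := exists_pow_forall_smul_ne w.1.asIdeal (S.N.mkQ x) (S.N.mkQ w.2) (by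
        intro t ht h0
        rw [← map_smul] at h0
        exact ht ((S.smul_mem_iff w hw t).mp ((Submodule.Quotient.mk_eq_zero S.N).mp h0)))
      refine ⟨n, fun _ c hc t ht hmem => hn c hc t ht ?_⟩
      rw [← map_smul, ← map_smul, ← sub_eq_zero, ← map_sub]
      exact (Submodule.Quotient.mk_eq_zero S.N).mpr hmem
    · exact ⟨0, fun h => absurd h hw⟩
  choose n hn using hkrull
  obtain ⟨s, hs, hsp⟩ : ∃ s ∈ ∏ w ∈ S.W, w.1.asIdeal ^ n w, s ∉ p.asIdeal := by
    by_contra! hcon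
    obtain ⟨w, hw, hle⟩ := (Ideal.IsPrime.prod_le p.isPrime).mp hcon
    have hwp : w.1 = p := eq_of_le_of_mem_dimSet hpdim (S.mem_dimSet w hw)
      (Ideal.IsPrime.le_of_pow_le hle)
    exact hpnew (hwp ▸ Finset.mem_image_of_mem _ hw)
  let N' : Submodule R M := S.N ⊔ p.asIdeal • Submodule.span R {s • x}
  have hN' : ∀ z : M, z ∈ N' ↔ ∃ a ∈ p.asIdeal, z - a • s • x ∈ S.N := by
    intro z
    simp only [N', Submodule.mem_sup, Submodule.mem_smul_span_singleton]
    constructor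
    · rintro ⟨u, hu, _, ⟨a, ha, rfl⟩, rfl⟩
      exact ⟨a, ha, by simpa using hu⟩
    · rintro ⟨a, ha, h⟩
      exact ⟨_, h, _, ⟨a, ha, rfl⟩, by simp⟩
  refine ⟨⟨N', insert (p, s • x) S.W, ?_, ?_, ?_⟩, le_sup_left, Finset.subset_insert _ _, ?_⟩
  · exact S.fg.sup (Submodule.FG.smul (IsNoetherian.noetherian _)
      (Submodule.fg_span_singleton _))
  · intro w hw
    rcases Finset.mem_insert.mp hw with rfl | hw
    · exact hpdim
    · exact S.mem_dimSet w hw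
  · intro w hw a
    rcases Finset.mem_insert.mp hw with rfl | hw
    · rw [hN']
      constructor
      · rintro ⟨b, hb, hab⟩
        rw [← sub_smul, smul_smul] at hab
        have h1 := (p.isPrime.mem_or_mem (hx _ hab)).resolve_right hsp
        simpa using add_mem h1 hb
      · intro ha
        exact ⟨a, ha, by simp⟩
    · constructor
      · intro ha
        by_contra haw
        obtain ⟨b, -, hb⟩ := (hN' _).mp ha
        have hsw : s ∈ w.1.asIdeal ^ n w :=
          Ideal.le_of_dvd (Finset.dvd_prod_of_mem _ hw) hs
        rw [smul_smul] at hb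
        exact hn w hw _ (Ideal.mul_mem_left _ b hsw) a haw hb
      · intro ha
        exact (le_sup_left : S.N ≤ N') ((S.smul_mem_iff w hw a).mpr ha)
  · rw [Finset.image_insert, Finset.card_insert_of_notMem hpnew]
    exact Nat.lt_succ_self _

/-- If `M` is a weakly Laskerian module over a Noetherian ring `R`, then for each `k ∈ ℕ`
there is a finitely generated submodule `N` of `M` with `Supp (M / N) ∩ A(R, k)` finite. -/
theorem weaklyLaskerian_exists_fg_submodule {R : Type*} [CommRing R] [IsNoetherianRing R]
    {M : Type*} [AddCommGroup M] [Module R M]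
    (hwl : ∀ N : Submodule R M, (associatedPrimes R (M ⧸ N)).Finite) (k : ℕ) :
    ∃ N : Submodule R M, N.FG ∧ (Module.support R (M ⧸ N) ∩ dimSet R k).Finite := by
  classical
  by_contra! hcon
  choose next hN hW hcard using fun S : WitnessStage R M k => exists_extension S (hcon S.N S.fg)
  let S : ℕ → WitnessStage R M k := fun i =>
    next^[i] ⟨⊥, ∅, Submodule.fg_bot, by simp, by simp⟩
  have hS : ∀ i, S (i + 1) = next (S i) := fun i => Function.iterate_succ_apply' _ _ _
  have hNmono : Monotone fun i => (S i).N := monotone_nat_of_le_succ fun i => by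
    rw [hS]; exact hN _
  have hWmono : Monotone fun i => (S i).W := monotone_nat_of_le_succ fun i => by
    rw [hS]; exact hW _
  have hcard' : ∀ i, i ≤ ((S i).W.image Prod.fst).card := by
    intro i
    induction i with
    | zero => exact Nat.zero_le _
    | succ i ih => rw [hS]; exact ih.trans_lt (hcard _)
  let L : Submodule R M := ⨆ i, (S i).N
  have hass : ∀ i, ∀ w ∈ (S i).W, w.1.asIdeal ∈ associatedPrimes R (M ⧸ L) := by
    intro i w hw
    rw [AssociatedPrimes.mem_iff, isAssociatedPrime_iff]
    refine ⟨w.1.isPrime, L.mkQ w.2, ?_⟩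
    ext a
    rw [Submodule.mem_colon_singleton, Submodule.mem_bot, ← map_smul, Submodule.mkQ_apply,
      Submodule.Quotient.mk_eq_zero, Submodule.mem_iSup_of_directed _ hNmono.directed_le]
    constructor
    · intro ha
      exact ⟨i, ((S i).smul_mem_iff w hw a).mpr ha⟩
    · rintro ⟨j, hj⟩
      exact ((S (max i j)).smul_mem_iff w (hWmono (le_max_left i j) hw) a).mp
        (hNmono (le_max_right i j) hj)
  have hle : ∀ i, i ≤ (hwl L).toFinset.card := by
    intro i
    refine (hcard' i).trans (Finset.card_le_card_of_injOn PrimeSpectrum.asIdeal ?_ ?_)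
    · intro q hq
      obtain ⟨w, hw, rfl⟩ := Finset.mem_image.mp (Finset.mem_coe.mp hq)
      simpa using hass i w hw
    · intro q _ q' _ h
      exact PrimeSpectrum.ext h
  exact absurd (hle ((hwl L).toFinset.card + 1)) (by omega)
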